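/- arXiv:1603.06493 — 2 statements merged into one kernel-verified Lean document; each statement's English description precedes it below -/
import Mathlib

section
/- For every ε > 0 there exists δ > 0, depending only on ε, N, p and κ, such that for every admissible pair (A, m) with constant κ and every u ∈ ℝ^N with u ≥ 0, g(u) ≠ 0 and Σ_{i=1}^N u_i |f_i(u)|^p ≤ δ g(u), one has min_{∅ ≠ I ⊆ {1,…,N}} |u − u_I| ≤ ε. In other words, min_{I ≠ ∅} |u − u_I| → 0 as v(u) → 0 over nonnegative u, uniformly with respect to admissible coefficients. -/
/-!
The argument is direct and gives an explicit `δ`. Let `M = max |f_i(u)| > 0` and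
`I = {i | u_i ≤ η}`. Since `u_i |f_i(u)|^p ≤ δ g(u) ≤ δ N M^p`, every `j ∉ I` satisfies
`|f_j(u)| ≤ τ M` as soon as `δ = η τ^p / N`. With `τ < 1`, an index attaining `M` therefore lies
in `I`, so `I` is nonempty.

The difference `d = u - u_I` satisfies `0 ≤ d_i ≤ η` on `I` and, off `I`, solves the linear system
`∑_{k ∉ I} a_{jk} d_k = -f_j(u) - ∑_{k ∈ I} a_{jk} d_k`, whose matrix is a principal submatrix
of `A`. Its inverse is bounded in terms of `N` and `κ` alone (`abs_le_of_principal_system`), so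
`max |d| ≤ η + C (τ M + N K η)` with `K = max(1, 1/κ)` bounding the coefficients (here
`0 < κ ≤ m_i` is the bordered determinant over `I = ∅`) and `C = C(N, κ)`. The same bound controls `u_I`, and hence
`M ≤ K + N K (max |d| + C K)`; for small `τ` the term with `max |d|` is absorbed on the left.
-/

open MeasureTheory Filter

/-- Principal minor of `A` over the index set `I`. -/
noncomputable def minorP {N : ℕ} (A : Matrix (Fin N) (Fin N) ℝ) (I : Finset (Fin N)) : ℝ :=
  Matrix.det (Matrix.of fun i j : {x : Fin N // x ∈ I} => A i.1 j.1)

/-- The determinant `Δ_{I,j}` obtained by bordering the principal minor over `I`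
with the column `m` and the row `j`. -/
noncomputable def minorM {N : ℕ} (A : Matrix (Fin N) (Fin N) ℝ) (m : Fin N → ℝ)
    (I : Finset (Fin N)) (j : Fin N) : ℝ :=
  Matrix.det (Matrix.of fun k l : Option {x : Fin N // x ∈ I} =>
    match k, l with
    | some k', some l' => A k'.1 l'.1
    | some k', none => m k'.1
    | none, some l' => A j l'.1
    | none, none => m j)

/-- An admissible pair of coefficients with constant `κ`:
entries of `A` and `m` bounded by `1/κ`, all principal minors `Δ_I ≥ κ`,
and all bordered determinants `Δ_{I,j} ≥ κ` for `j ∉ I`. -/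
def IsAdmissible {N : ℕ} (κ : ℝ) (A : Matrix (Fin N) (Fin N) ℝ) (m : Fin N → ℝ) : Prop :=
  (∀ i j, |A i j| ≤ 1 / κ) ∧ (∀ i, m i ≤ 1 / κ) ∧
    (∀ I : Finset (Fin N), κ ≤ minorP A I) ∧
    (∀ I : Finset (Fin N), ∀ j ∉ I, κ ≤ minorM A m I j)

/-- `f_i(u) = m_i − Σ_j a_{ij} u_j`. -/
def fComp {N : ℕ} (A : Matrix (Fin N) (Fin N) ℝ) (m : Fin N → ℝ) (u : Fin N → ℝ)
    (i : Fin N) : ℝ :=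
  m i - ∑ j, A i j * u j

/-- Entrywise bound for the inverse of a matrix with bounded entries and determinant bounded
below, from the adjugate formula `det B • x = adj B *ᵥ (B *ᵥ x)`. -/
lemma abs_le_of_mulVec {n : Type*} [Fintype n] [DecidableEq n] (N : ℕ)
    (hn : Fintype.card n ≤ N) {κ K β : ℝ} (hκ : 0 < κ) (hK : 1 ≤ K)
    (B : Matrix n n ℝ) (hB : ∀ i j, |B i j| ≤ K) (hdet : κ ≤ B.det)
    (x : n → ℝ) (hβ : 0 ≤ β) (hx : ∀ i, |(B.mulVec x) i| ≤ β) (i : n) :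
    |x i| ≤ (N * (N.factorial * K ^ N) / κ) * β := by
  have hadj : ∀ i j, |B.adjugate i j| ≤ N.factorial * K ^ N := by
    intro i j
    rw [Matrix.adjugate_apply]
    have h := Matrix.det_le (A := B.updateRow j (Pi.single i 1))
      (abv := AbsoluteValue.abs) (x := K) (by
        intro a b
        change |_| ≤ K
        rw [Matrix.updateRow_apply]
        split_ifs
        · rw [Pi.single_apply]
          split_ifs
          · simpa using hK
          · simp; linarith
        · exact hB a b)
    change |_| ≤ _ at h
    refine h.trans ?_
    rw [nsmul_eq_mul]
    gcongr
  have hsol : B.det * x i = ∑ j, B.adjugate i j * (B.mulVec x) j := by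
    have h : (B.adjugate.mulVec (B.mulVec x)) i = B.det * x i := by
      rw [Matrix.mulVec_mulVec, Matrix.adjugate_mul, Matrix.smul_mulVec, Matrix.one_mulVec]
      simp
    rw [← h]
    rfl
  have hbound : B.det * |x i| ≤ N * (N.factorial * K ^ N) * β := by
    have hpos : 0 < B.det := lt_of_lt_of_le hκ hdet
    calc B.det * |x i| = |B.det * x i| := by rw [abs_mul, abs_of_pos hpos]
      _ = |∑ j, B.adjugate i j * (B.mulVec x) j| := by rw [hsol]
      _ ≤ ∑ j, |B.adjugate i j * (B.mulVec x) j| := Finset.abs_sum_le_sum_abs _ _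
      _ ≤ ∑ _j : n, (N.factorial * K ^ N) * β := by
          refine Finset.sum_le_sum fun j _ => ?_
          rw [abs_mul]
          exact mul_le_mul (hadj i j) (hx j) (abs_nonneg _) (by positivity)
      _ = Fintype.card n * ((N.factorial * K ^ N) * β) := by simp
      _ ≤ N * ((N.factorial * K ^ N) * β) := by gcongr
      _ = _ := by ring
  rw [div_mul_eq_mul_div, le_div_iff₀ hκ]
  calc |x i| * κ ≤ |x i| * B.det := by gcongr
    _ = B.det * |x i| := mul_comm _ _
    _ ≤ _ := hbound

/-- Solutions of a principal subsystem over `J` are bounded by the right-hand side, with a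
constant that depends neither on `A` nor on `J`. -/
lemma abs_le_of_principal_system {N : ℕ} {κ K β : ℝ} (hκ : 0 < κ) (hK : 1 ≤ K)
    (A : Matrix (Fin N) (Fin N) ℝ) (hA : ∀ i j, |A i j| ≤ K) (J : Finset (Fin N))
    (hJ : κ ≤ minorP A J) (x : Fin N → ℝ) (hβ : 0 ≤ β)
    (hx : ∀ j ∈ J, |∑ k ∈ J, A j k * x k| ≤ β) (j : Fin N) (hj : j ∈ J) :
    |x j| ≤ (N * (N.factorial * K ^ N) / κ) * β := by
  refine abs_le_of_mulVec (n := {x : Fin N // x ∈ J}) N ?_ hκ hK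
    (Matrix.of fun i j : {x : Fin N // x ∈ J} => A i.1 j.1) (fun i j => hA _ _) hJ
    (fun i => x i.1) hβ ?_ ⟨j, hj⟩
  · simpa using Finset.card_le_univ J
  · intro i
    have h : ((Matrix.of fun i j : {x : Fin N // x ∈ J} => A i.1 j.1).mulVec
        (fun i => x i.1)) i = ∑ k ∈ J, A i.1 k * x k := by
      rw [← Finset.sum_coe_sort J]
      rfl
    rw [h]
    exact hx _ i.2

lemma minorM_empty {N : ℕ} (A : Matrix (Fin N) (Fin N) ℝ) (m : Fin N → ℝ) (j : Fin N) :
    minorM A m ∅ j = m j := by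
  unfold minorM
  rw [Matrix.det_unique]
  rfl

lemma abs_sum_le_card_mul {N : ℕ} {K c : ℝ} (hK : 0 ≤ K) (hc : 0 ≤ c) (s : Finset (Fin N))
    (a x : Fin N → ℝ) (ha : ∀ i, |a i| ≤ K) (hx : ∀ i ∈ s, |x i| ≤ c) :
    |∑ i ∈ s, a i * x i| ≤ N * K * c := by
  calc |∑ i ∈ s, a i * x i| ≤ ∑ i ∈ s, |a i * x i| := Finset.abs_sum_le_sum_abs _ _
    _ ≤ ∑ _i ∈ s, K * c := by
        refine Finset.sum_le_sum fun i hi => ?_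
        rw [abs_mul]
        exact mul_le_mul (ha i) (hx i hi) (abs_nonneg _) hK
    _ = s.card * (K * c) := by simp
    _ ≤ N * (K * c) := by
        have : s.card ≤ N := by simpa using Finset.card_le_univ s
        gcongr
    _ = _ := by ring

/-- `min_{I ≠ ∅} |u − u_I| → 0` as `v(u) → 0` over nonnegative `u`, uniformly in the
admissible coefficients: for every `ε > 0` there is `δ > 0` depending only on `ε`, `N`, `p`,
`κ` such that for every admissible pair, with `u_I` the solution of the system
`u_i = 0 (i ∈ I)`, `f_j(u) = 0 (j ∉ I)`, and for every nonnegative `u` with `g(u) ≠ 0` and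
`Σ_i u_i |f_i(u)|^p ≤ δ g(u)`, there is a nonempty `I` with `|u − u_I| ≤ ε`. -/
theorem min_dist_to_uI_tendsto_zero_uniform {N : ℕ} (hN : 0 < N) (p κ : ℝ)
    (hp : 1 ≤ p) (hκ : 0 < κ) :
    ∀ ε : ℝ, 0 < ε → ∃ δ : ℝ, 0 < δ ∧
      ∀ (A : Matrix (Fin N) (Fin N) ℝ) (m : Fin N → ℝ), IsAdmissible κ A m →
        ∀ uI : Finset (Fin N) → Fin N → ℝ,
          (∀ I : Finset (Fin N), (∀ i ∈ I, uI I i = 0) ∧ ∀ j ∉ I, fComp A m (uI I) j = 0) →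
        ∀ u : Fin N → ℝ, (∀ i, 0 ≤ u i) → (∑ i, |fComp A m u i| ^ p) ≠ 0 →
          (∑ i, u i * |fComp A m u i| ^ p) ≤ δ * ∑ i, |fComp A m u i| ^ p →
          ∃ I : Finset (Fin N), I.Nonempty ∧
            Real.sqrt (∑ i, (u i - uI I i) ^ 2) ≤ ε := by
  intro ε hε
  obtain ⟨K, hK1, hKκ⟩ : ∃ K : ℝ, 1 ≤ K ∧ 1 / κ ≤ K := ⟨max 1 (1 / κ), by simp, by simp⟩
  have hK0 : 0 < K := by linarith
  have hN' : (0 : ℝ) < N := by exact_mod_cast hN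
  obtain ⟨C, hC⟩ : ∃ C : ℝ, C = N * (N.factorial * K ^ N) / κ := ⟨_, rfl⟩
  have hC0 : 0 < C := by
    rw [hC]
    have : (0 : ℝ) < N.factorial := by exact_mod_cast N.factorial_pos
    positivity
  obtain ⟨R, hR⟩ : ∃ R : ℝ, R = K + N * K * (C * K) := ⟨_, rfl⟩
  have hR0 : 0 < R := by rw [hR]; positivity
  obtain ⟨η, hη⟩ : ∃ η : ℝ, η = ε / (4 * N * (1 + C * (N * K))) := ⟨_, rfl⟩
  have hη0 : 0 < η := by rw [hη]; positivity
  have hηε : η * (1 + C * (N * K)) = ε / (4 * N) := by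
    rw [hη]; field_simp
  -- `τ` small enough to absorb the `max |d|` term and to make the remaining one at most `ε / (4N)`
  obtain ⟨τ, hτ0, hτ1, hτ2, hτ3⟩ : ∃ τ : ℝ, 0 < τ ∧ τ < 1 ∧ C * τ * (N * K) ≤ 1 / 2 ∧
      C * τ * R ≤ ε / (4 * N) := by
    refine ⟨min (1 / 2) (min (1 / (2 * C * (N * K))) (ε / (4 * N * C * R))), ?_, ?_, ?_, ?_⟩
    · positivity
    · exact lt_of_le_of_lt (min_le_left _ _) (by norm_num)
    · calc _ ≤ C * (1 / (2 * C * (N * K))) * (N * K) := by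
            gcongr
            exact (min_le_right _ _).trans (min_le_left _ _)
        _ = 1 / 2 := by field_simp
    · calc _ ≤ C * (ε / (4 * N * C * R)) * R := by
            gcongr
            exact (min_le_right _ _).trans (min_le_right _ _)
        _ = _ := by field_simp
  have hτp : 0 < τ ^ p := Real.rpow_pos_of_pos hτ0 p
  refine ⟨η * τ ^ p / N, by positivity, ?_⟩
  intro A m hadm uI huI u hu hg hv
  obtain ⟨hA', hm', hP, hM⟩ := hadm
  have hA : ∀ i j, |A i j| ≤ K := fun i j => (hA' i j).trans hKκ
  have hm : ∀ i, |m i| ≤ K := by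
    intro i
    have h := hM ∅ i (by simp)
    rw [minorM_empty] at h
    rw [abs_of_pos (by linarith)]
    exact (hm' i).trans hKκ
  have hp0 : 0 < p := by linarith
  have : Nonempty (Fin N) := ⟨⟨0, hN⟩⟩
  obtain ⟨i₀, -, hi₀⟩ := Finset.exists_max_image Finset.univ (fun i => |fComp A m u i|)
    Finset.univ_nonempty
  obtain ⟨M, hMdef⟩ : ∃ M : ℝ, M = |fComp A m u i₀| := ⟨_, rfl⟩
  have hfM : ∀ i, |fComp A m u i| ≤ M := fun i => hMdef ▸ hi₀ i (Finset.mem_univ i)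
  have hM0 : 0 < M := by
    refine lt_of_le_of_ne (hMdef ▸ abs_nonneg _) fun h => hg ?_
    refine Finset.sum_eq_zero fun i _ => ?_
    have : |fComp A m u i| = 0 := le_antisymm (h ▸ hfM i) (abs_nonneg _)
    rw [this, Real.zero_rpow hp0.ne']
  have hgM : ∑ i, |fComp A m u i| ^ p ≤ N * M ^ p := by
    calc _ ≤ ∑ _i : Fin N, M ^ p :=
          Finset.sum_le_sum fun i _ => Real.rpow_le_rpow (abs_nonneg _) (hfM i) hp0.le
      _ = _ := by simp
  have hsmall : ∀ j, η < u j → |fComp A m u j| ≤ τ * M := by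
    intro j hj
    have h1 : u j * |fComp A m u j| ^ p ≤ ∑ i, u i * |fComp A m u i| ^ p :=
      Finset.single_le_sum (f := fun i => u i * |fComp A m u i| ^ p)
        (fun i _ => mul_nonneg (hu i) (Real.rpow_nonneg (abs_nonneg _) _)) (Finset.mem_univ j)
    have h2 : η * τ ^ p / N * ∑ i, |fComp A m u i| ^ p ≤ η * (τ ^ p * M ^ p) := by
      calc _ ≤ η * τ ^ p / N * (N * M ^ p) := by gcongr
        _ = _ := by field_simp
    have h3 : η * |fComp A m u j| ^ p ≤ u j * |fComp A m u j| ^ p := by gcongr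
    have h4 : |fComp A m u j| ^ p ≤ (τ * M) ^ p := by
      rw [Real.mul_rpow hτ0.le hM0.le]
      exact le_of_mul_le_mul_left (by linarith) hη0
    exact (Real.rpow_le_rpow_iff (abs_nonneg _) (by positivity) hp0).1 h4
  obtain ⟨I, hI⟩ : ∃ I : Finset (Fin N), ∀ i, i ∈ I ↔ u i ≤ η :=
    ⟨Finset.univ.filter fun i => u i ≤ η, by simp⟩
  refine ⟨I, ⟨i₀, ?_⟩, ?_⟩
  · rw [hI]
    by_contra hcon
    have h := hsmall i₀ (not_le.1 hcon)
    rw [← hMdef] at h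
    nlinarith
  obtain ⟨w, hw⟩ : ∃ w, w = uI I := ⟨_, rfl⟩
  rw [← hw]
  obtain ⟨hw0, hwf⟩ := huI I
  rw [← hw] at hw0 hwf
  have hsplit : ∀ (j : Fin N) (x : Fin N → ℝ),
      ∑ k, A j k * x k = ∑ k ∈ I, A j k * x k + ∑ k ∈ Iᶜ, A j k * x k :=
    fun j x => (Finset.sum_add_sum_compl I _).symm
  have hwb : ∀ j, |w j| ≤ C * K := by
    intro j
    by_cases hj : j ∈ I
    · rw [hw0 j hj, abs_zero]; positivity
    · rw [hC]
      refine abs_le_of_principal_system hκ hK1 A hA Iᶜ (hP _) w hK0.le ?_ j (by simpa using hj)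
      intro j hj
      have h := hwf j (by simpa using hj)
      have h0 : ∑ k ∈ I, A j k * w k = 0 :=
        Finset.sum_eq_zero fun k hk => by rw [hw0 k hk, mul_zero]
      unfold fComp at h
      rw [hsplit, h0] at h
      rw [show ∑ k ∈ Iᶜ, A j k * w k = m j by linarith]
      exact hm j
  have hdI : ∀ i ∈ I, |u i - w i| ≤ η := by
    intro i hi
    rw [hw0 i hi, sub_zero, abs_of_nonneg (hu i)]
    exact (hI i).1 hi
  have hdJ : ∀ j ∉ I, |u j - w j| ≤ C * (τ * M + N * K * η) := by
    intro j hj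
    rw [hC]
    refine abs_le_of_principal_system hκ hK1 A hA Iᶜ (hP _) (fun j => u j - w j)
      (by positivity) ?_ j (by simpa using hj)
    intro j hj
    have hj' : j ∉ I := by simpa using hj
    have h := hwf j hj'
    have hs := hsmall j (not_le.1 fun hcon => hj' ((hI j).2 hcon))
    have h2 : ∑ k ∈ Iᶜ, A j k * (u k - w k)
        = -fComp A m u j - ∑ k ∈ I, A j k * (u k - w k) := by
      have h3 := hsplit j (fun k => u k - w k)
      have h4 : ∑ k, A j k * (u k - w k) = ∑ k, A j k * u k - ∑ k, A j k * w k := by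
        simp [mul_sub, Finset.sum_sub_distrib]
      unfold fComp at h ⊢
      linarith
    rw [h2]
    have h5 := abs_sum_le_card_mul hK0.le hη0.le I (A j) (fun k => u k - w k) (hA j) hdI
    calc _ ≤ |-fComp A m u j| + |∑ k ∈ I, A j k * (u k - w k)| := abs_sub _ _
      _ ≤ _ := by rw [abs_neg]; exact add_le_add hs h5
  obtain ⟨i₁, -, hi₁⟩ := Finset.exists_max_image Finset.univ (fun i => |u i - w i|)
    Finset.univ_nonempty
  obtain ⟨D, hD⟩ : ∃ D : ℝ, D = |u i₁ - w i₁| := ⟨_, rfl⟩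
  have hdD : ∀ i, |u i - w i| ≤ D := fun i => hD ▸ hi₁ i (Finset.mem_univ i)
  have hD0 : 0 ≤ D := hD ▸ abs_nonneg _
  have hDle : D ≤ η + C * (τ * M + N * K * η) := by
    have : 0 ≤ C * (τ * M + N * K * η) := by positivity
    by_cases h : i₁ ∈ I
    · have := hdI i₁ h
      linarith
    · have := hdJ i₁ h
      linarith
  have hMle : M ≤ K + N * K * (D + C * K) := by
    rw [hMdef]
    have h1 : |∑ j, A i₀ j * u j| ≤ N * K * (D + C * K) := by
      refine abs_sum_le_card_mul hK0.le (by positivity) _ (A i₀) u (hA i₀) fun i _ => ?_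
      calc |u i| = |(u i - w i) + w i| := by ring_nf
        _ ≤ |u i - w i| + |w i| := abs_add_le _ _
        _ ≤ _ := add_le_add (hdD i) (hwb i)
    unfold fComp
    exact (abs_sub _ _).trans (add_le_add (hm i₀) h1)
  have hDfin : D ≤ ε / N := by
    have h1 : C * τ * M ≤ C * τ * (K + N * K * (D + C * K)) := by gcongr
    have h2 : C * τ * (K + N * K * (D + C * K)) = C * τ * R + C * τ * (N * K) * D := by
      rw [hR]; ring
    have h3 : C * τ * (N * K) * D ≤ 1 / 2 * D := by gcongr
    have h4 : η + C * (τ * M + N * K * η) = η * (1 + C * (N * K)) + C * τ * M := by ring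
    have h5 : ε / (4 * N) = ε / N / 4 := by field_simp
    rw [h4, hηε] at hDle
    rw [h5] at hDle hτ3
    linarith
  have hsum : ∑ i, (u i - w i) ^ 2 ≤ ε ^ 2 := by
    calc ∑ i, (u i - w i) ^ 2 = ∑ i, |u i - w i| ^ 2 := by simp
      _ ≤ ∑ _i : Fin N, (ε / N) ^ 2 :=
          Finset.sum_le_sum fun i _ => by
            have := (hdD i).trans hDfin
            gcongr
      _ = ε ^ 2 / N := by simp; field_simp
      _ ≤ ε ^ 2 := div_le_self (by positivity) (by exact_mod_cast hN)
  exact Real.sqrt_le_iff.2 ⟨hε.le, hsum⟩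
end

section
/- Let (A, m) be an admissible pair with constant κ. Then for every I ⊆ {1,…,N}: (a) the linear system u_i = 0 (i ∈ I), f_j(u) = 0 (j ∉ I) has a unique solution u_I ∈ ℝ^N; (b) writing J for the complement of I, the solution is given by Cramer's rule: u_{I,i} = Δ_{J∖{i}, i} / Δ_J for i ∈ J and u_{I,i} = 0 for i ∈ I, and f_j(u_I) = Δ_{J, j} / Δ_J for j ∈ I; (c) there exist constants 0 < c ≤ C depending only on N and κ (not on the particular admissible coefficients) such that 0 ≤ u_{I,i} ≤ C and 0 ≤ f_j(u_I) ≤ C for all i, j, and moreover u_{I,j} ≥ c for every j ∉ I and f_i(u_I) ≥ c for every i ∈ I. -/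
/-!
Everything rests on one determinant identity, `minorM_eq`: if `j ∉ K`, `u` vanishes outside
`K ∪ {j}` and `f_k(u) = 0` for `k ∈ K`, then
`Δ_{K,j} = f_j(u) Δ_K + u_j Δ_{K ∪ {j}}`.
Indeed `Δ_{K,j}` is linear in the bordering column `m`, and `m = f(u) + ∑_l u_l A_{·l}`; the
columns `l ∈ K` contribute `0` (repeated column), the column `j` contributes `Δ_{K ∪ {j}}`, and
`f(u)`, which vanishes on `K`, contributes `f_j(u) Δ_K`.

Let `J = Iᶜ` and let `u` solve the system. Taking `K = J`, `j ∈ I` (so `u_j = 0`) gives the formula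
for `f_j(u)`; taking `K = J ∖ {i}`, `j = i ∈ J` (so `f_i(u) = 0`) gives the formula for `u_i`. The
latter already implies uniqueness; existence follows from `Δ_J ≠ 0`. For the bounds, all the
determinants involved have size at most `N` and entries at most `max 1 (1/κ)` in absolute value
(`m_j = Δ_{∅,j} ≥ κ` bounds `m` from below), hence lie in `[κ, N! max(1, 1/κ)^N]`.
-/

open MeasureTheory Filter

/-- `Δ_{K,j}` as a Cramer determinant, which exhibits its linearity in `m`. -/
lemma minorM_eq_cramer {N : ℕ} (A : Matrix (Fin N) (Fin N) ℝ) (K : Finset (Fin N)) (j : Fin N) :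
    ∃ B : Matrix (Option {x : Fin N // x ∈ K}) (Option {x : Fin N // x ∈ K}) ℝ,
      ∀ m : Fin N → ℝ,
        minorM A m K j = Matrix.cramer B (fun o => m (o.elim j (fun x => x.1))) none := by
  refine ⟨Matrix.of fun k l => l.elim 0 (fun l' => A (k.elim j (fun x => x.1)) l'.1), fun m => ?_⟩
  rw [Matrix.cramer_apply, minorM]
  congr 1
  ext k l
  rcases k with _ | k <;> rcases l with _ | l <;> simp

lemma minorM_add {N : ℕ} (A : Matrix (Fin N) (Fin N) ℝ) (K : Finset (Fin N)) (j : Fin N)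
    (v w : Fin N → ℝ) : minorM A (v + w) K j = minorM A v K j + minorM A w K j := by
  obtain ⟨B, hB⟩ := minorM_eq_cramer A K j
  rw [hB, hB, hB, ← Pi.add_apply, ← map_add]
  rfl

lemma minorM_smul {N : ℕ} (A : Matrix (Fin N) (Fin N) ℝ) (K : Finset (Fin N)) (j : Fin N)
    (r : ℝ) (v : Fin N → ℝ) : minorM A (r • v) K j = r * minorM A v K j := by
  obtain ⟨B, hB⟩ := minorM_eq_cramer A K j
  rw [hB, hB, ← smul_eq_mul, ← Pi.smul_apply, ← map_smul]
  rfl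

lemma minorM_sum {N : ℕ} (A : Matrix (Fin N) (Fin N) ℝ) (K : Finset (Fin N)) (j : Fin N)
    (s : Finset (Fin N)) (v : Fin N → Fin N → ℝ) :
    minorM A (∑ l ∈ s, v l) K j = ∑ l ∈ s, minorM A (v l) K j := by
  induction s using Finset.induction_on with
  | empty =>
    have h := minorM_smul A K j 0 0
    simpa using h
  | insert a s ha ih => rw [Finset.sum_insert ha, Finset.sum_insert ha, minorM_add, ih]

lemma minorM_col_mem {N : ℕ} (A : Matrix (Fin N) (Fin N) ℝ) (K : Finset (Fin N)) (j l : Fin N)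
    (hl : l ∈ K) : minorM A (fun i => A i l) K j = 0 := by
  refine Matrix.det_zero_of_column_eq (i := none) (j := some ⟨l, hl⟩) (by simp) ?_
  rintro (_ | k) <;> rfl

lemma minorM_col_self {N : ℕ} (A : Matrix (Fin N) (Fin N) ℝ) (K : Finset (Fin N)) (j : Fin N)
    (hj : j ∉ K) : minorM A (fun i => A i j) K j = minorP A (insert j K) := by
  rw [minorP, ← Matrix.det_submatrix_equiv_self (Finset.subtypeInsertEquivOption hj).symm, minorM]
  congr 1
  ext k l
  rcases k with _ | k <;> rcases l with _ | l <;> rfl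

lemma minorM_of_vanish {N : ℕ} (A : Matrix (Fin N) (Fin N) ℝ) (K : Finset (Fin N)) (j : Fin N)
    (v : Fin N → ℝ) (hv : ∀ k ∈ K, v k = 0) : minorM A v K j = v j * minorP A K := by
  have h := Matrix.det_fromBlocks_zero₁₂
    (Matrix.of fun k l : {x : Fin N // x ∈ K} => A k.1 l.1)
    (Matrix.of fun (_ : PUnit.{1}) (l : {x : Fin N // x ∈ K}) => A j l.1)
    (Matrix.of fun (_ _ : PUnit.{1}) => v j)
  rw [← Matrix.det_submatrix_equiv_self (Equiv.optionEquivSumPUnit _)] at h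
  rw [Matrix.det_unique (n := PUnit), mul_comm] at h
  rw [minorP, minorM]
  refine Eq.trans ?_ h
  congr 1
  ext k l
  rcases k with _ | k <;> rcases l with _ | l <;> simp [hv]

/-- The common source of the two Cramer formulas: `f_j(u) = 0` isolates `u_j`, and `u_j = 0` isolates
`f_j(u)`. -/
lemma minorM_eq {N : ℕ} (A : Matrix (Fin N) (Fin N) ℝ) (m u : Fin N → ℝ) (K : Finset (Fin N))
    (j : Fin N) (hj : j ∉ K) (hu : ∀ l, l ∉ insert j K → u l = 0)
    (hf : ∀ k ∈ K, fComp A m u k = 0) :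
    minorM A m K j = fComp A m u j * minorP A K + u j * minorP A (insert j K) := by
  have hm : m = fComp A m u + ∑ l, u l • fun i => A i l := by
    ext i
    simp [fComp, Finset.sum_apply, mul_comm]
  conv_lhs => rw [hm]
  rw [minorM_add, minorM_of_vanish A K j _ hf, minorM_sum, Finset.sum_eq_single j]
  · rw [minorM_smul, minorM_col_self A K j hj]
  · intro l _ hlj
    rw [minorM_smul]
    by_cases hl : l ∈ K
    · rw [minorM_col_mem A K j l hl, mul_zero]
    · rw [hu l (by simp [hlj, hl]), zero_mul]
  · simp

lemma det_le_uniform {N : ℕ} {n : Type*} [Fintype n] [DecidableEq n] (hn : Fintype.card n ≤ N)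
    {b : ℝ} (hb : 1 ≤ b) (B : Matrix n n ℝ) (hB : ∀ i j, |B i j| ≤ b) :
    B.det ≤ (N.factorial : ℝ) * b ^ N := by
  have h := Matrix.det_le (A := B) (abv := AbsoluteValue.abs) (x := b) hB
  rw [nsmul_eq_mul] at h
  refine (le_abs_self _).trans (h.trans ?_)
  gcongr

/-- Existence of `u_I`: invert the principal submatrix over `Iᶜ` and extend by zero. -/
lemma exists_solution {N : ℕ} (A : Matrix (Fin N) (Fin N) ℝ) (m : Fin N → ℝ)
    (I : Finset (Fin N)) (h : minorP A Iᶜ ≠ 0) :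
    ∃ u : Fin N → ℝ, (∀ i ∈ I, u i = 0) ∧ ∀ j ∉ I, fComp A m u j = 0 := by
  set B : Matrix {x : Fin N // x ∈ Iᶜ} {x : Fin N // x ∈ Iᶜ} ℝ :=
    Matrix.of fun i j => A i.1 j.1 with hB
  have hdet : IsUnit B.det := isUnit_iff_ne_zero.mpr h
  set v := B⁻¹.mulVec (fun i => m i.1) with hv
  have hBv : B.mulVec v = fun i => m i.1 := by
    rw [hv, Matrix.mulVec_mulVec, Matrix.mul_nonsing_inv _ hdet, Matrix.one_mulVec]
  refine ⟨fun i => if hi : i ∈ Iᶜ then v ⟨i, hi⟩ else 0, fun i hi => by simp [hi], fun j hj => ?_⟩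
  have hj' := congrFun hBv ⟨j, Finset.mem_compl.mpr hj⟩
  simp only [Matrix.mulVec, dotProduct, hB, Matrix.of_apply] at hj'
  rw [fComp, sub_eq_zero, ← hj', ← Finset.sum_subset (Finset.subset_univ Iᶜ),
    ← Finset.sum_coe_sort Iᶜ]
  · refine Finset.sum_congr rfl fun x _ => ?_
    rw [dif_pos x.2]
  · intro x _ hx
    rw [dif_neg hx, mul_zero]

/-- For an admissible pair `(A, m)` and any index set `I`:
(a) the system `u_i = 0 (i ∈ I)`, `f_j(u) = 0 (j ∉ I)` has a unique solution `u_I`;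
(b) the solution is given by Cramer's rule via the determinants `Δ`;
(c) uniformly in the admissible coefficients, `0 ≤ u_{I,i} ≤ C`, `0 ≤ f_j(u_I) ≤ C`,
`u_{I,j} ≥ c` for `j ∉ I` and `f_i(u_I) ≥ c` for `i ∈ I`, with `0 < c ≤ C` depending
only on `N` and `κ`. -/
theorem uI_exists_unique_cramer_bounds {N : ℕ} (hN : 0 < N) (κ : ℝ) (hκ : 0 < κ) :
    ∃ c C : ℝ, 0 < c ∧ c ≤ C ∧
      ∀ (A : Matrix (Fin N) (Fin N) ℝ) (m : Fin N → ℝ), IsAdmissible κ A m →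
        ∀ I : Finset (Fin N),
          (∃! u : Fin N → ℝ, (∀ i ∈ I, u i = 0) ∧ ∀ j ∉ I, fComp A m u j = 0) ∧
          ∀ u : Fin N → ℝ, ((∀ i ∈ I, u i = 0) ∧ ∀ j ∉ I, fComp A m u j = 0) →
            (∀ i ∉ I, u i = minorM A m (Iᶜ.erase i) i / minorP A Iᶜ) ∧
            (∀ j ∈ I, fComp A m u j = minorM A m Iᶜ j / minorP A Iᶜ) ∧
            (∀ i, 0 ≤ u i ∧ u i ≤ C) ∧
            (∀ j, 0 ≤ fComp A m u j ∧ fComp A m u j ≤ C) ∧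
            (∀ j ∉ I, c ≤ u j) ∧
            (∀ i ∈ I, c ≤ fComp A m u i) := by
  set b : ℝ := max 1 (1 / κ) with hb
  have hb1 : 1 ≤ b := le_max_left _ _
  set M : ℝ := (N.factorial : ℝ) * b ^ N with hM
  have hM0 : 0 < M := by positivity
  have hc0 : 0 < κ / M := by positivity
  refine ⟨κ / M, max (M / κ) (κ / M), hc0, le_max_right _ _, ?_⟩
  rintro A m ⟨hA, hm, hP, hD⟩ I
  have hPpos : ∀ K, 0 < minorP A K := fun K => hκ.trans_le (hP K)
  have hAb : ∀ i j, |A i j| ≤ b := fun i j => (hA i j).trans (le_max_right _ _)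
  -- `m_i = Δ_{∅,i} > 0`, so the one-sided bound on `m` is a bound on `|m|`.
  have hmb : ∀ i, |m i| ≤ b := fun i => by
    have h1 := hD ∅ i (by simp)
    rw [minorM_of_vanish A ∅ i m (by simp)] at h1
    have h2 : minorP A ∅ = 1 := Matrix.det_isEmpty
    rw [h2, mul_one] at h1
    rw [abs_of_pos (hκ.trans_le h1)]
    exact (hm i).trans (le_max_right _ _)
  have hPle : ∀ K, minorP A K ≤ M := fun K =>
    det_le_uniform (by simpa using Finset.card_le_univ K) hb1 _ fun i j => hAb _ _
  have hDle : ∀ K, ∀ j ∉ K, minorM A m K j ≤ M := fun K j hj => by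
    refine det_le_uniform ?_ hb1 _ ?_
    · have h := Finset.card_le_univ (insert j K)
      rw [Finset.card_insert_of_notMem hj] at h
      simpa using h
    · rintro (_ | k) (_ | l)
      exacts [hmb _, hAb _ _, hmb _, hAb _ _]
  have hq : ∀ K j, j ∉ K → ∀ L, κ / M ≤ minorM A m K j / minorP A L ∧
      minorM A m K j / minorP A L ≤ max (M / κ) (κ / M) := fun K j hj L =>
    ⟨div_le_div₀ (hκ.le.trans (hD K j hj)) (hD K j hj) (hPpos L) (hPle L),
      (div_le_div₀ hM0.le (hDle K j hj) hκ (hP L)).trans (le_max_left _ _)⟩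
  have hC0 : 0 ≤ max (M / κ) (κ / M) := hc0.le.trans (le_max_right _ _)
  have cramer_u : ∀ u : Fin N → ℝ, ((∀ i ∈ I, u i = 0) ∧ ∀ j ∉ I, fComp A m u j = 0) →
      ∀ i ∉ I, u i = minorM A m (Iᶜ.erase i) i / minorP A Iᶜ := by
    rintro u ⟨hu, hf⟩ i hi
    have hins : insert i (Iᶜ.erase i) = Iᶜ := Finset.insert_erase (Finset.mem_compl.mpr hi)
    have h := minorM_eq A m u (Iᶜ.erase i) i (Finset.notMem_erase _ _)
      (fun l hl => hu l (by rw [hins] at hl; simpa using hl))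
      (fun k hk => hf k (Finset.mem_compl.mp (Finset.mem_of_mem_erase hk)))
    rw [hins, hf i hi, zero_mul, zero_add] at h
    rw [h, mul_div_cancel_right₀ _ (hPpos _).ne']
  have cramer_f : ∀ u : Fin N → ℝ, ((∀ i ∈ I, u i = 0) ∧ ∀ j ∉ I, fComp A m u j = 0) →
      ∀ j ∈ I, fComp A m u j = minorM A m Iᶜ j / minorP A Iᶜ := by
    rintro u ⟨hu, hf⟩ j hj
    have h := minorM_eq A m u Iᶜ j (by simpa using hj)
      (fun l hl => hu l (by
        have := fun h' => hl (Finset.mem_insert_of_mem h')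
        simpa using this))
      (fun k hk => hf k (Finset.mem_compl.mp hk))
    rw [hu j hj, zero_mul, add_zero] at h
    rw [h, mul_div_cancel_right₀ _ (hPpos _).ne']
  refine ⟨?_, fun u hu => ?_⟩
  · obtain ⟨u, hu⟩ := exists_solution A m I (hPpos _).ne'
    refine ⟨u, hu, fun w hw => funext fun i => ?_⟩
    by_cases hi : i ∈ I
    · rw [hu.1 i hi, hw.1 i hi]
    · rw [cramer_u u hu i hi, cramer_u w hw i hi]
  · have hub : ∀ i ∉ I, κ / M ≤ u i ∧ u i ≤ max (M / κ) (κ / M) := fun i hi => by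
      rw [cramer_u u hu i hi]
      exact hq _ _ (Finset.notMem_erase _ _) _
    have hfb : ∀ j ∈ I, κ / M ≤ fComp A m u j ∧ fComp A m u j ≤ max (M / κ) (κ / M) :=
      fun j hj => by
        rw [cramer_f u hu j hj]
        exact hq _ _ (by simpa using hj) _
    refine ⟨cramer_u u hu, cramer_f u hu, fun i => ?_, fun j => ?_,
      fun j hj => (hub j hj).1, fun i hi => (hfb i hi).1⟩
    · by_cases hi : i ∈ I
      · rw [hu.1 i hi]
        exact ⟨le_rfl, hC0⟩
      · exact ⟨hc0.le.trans (hub i hi).1, (hub i hi).2⟩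
    · by_cases hj : j ∈ I
      · exact ⟨hc0.le.trans (hfb j hj).1, (hfb j hj).2⟩
      · rw [hu.2 j hj]
        exact ⟨le_rfl, hC0⟩
end
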